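/- arXiv:2201.04838 — 8 statements merged into one kernel-verified Lean document; each statement's English description precedes it below -/
import Mathlib

section
/- Euclid, Elements I, Proposition 7 (uniqueness of a triangle on a given base on a given side): let A and B be distinct points of the Euclidean plane, and let C and D be points lying strictly on the same side of the line through A and B. If dist A C = dist A D and dist B C = dist B D, then C = D. -/
open EuclideanGeometry Affine

theorem euclid_I_7 (A B C D : EuclideanSpace ℝ (Fin 2)) (hAB : A ≠ B)
    (hside : (affineSpan ℝ ({A, B} : Set (EuclideanSpace ℝ (Fin 2)))).SSameSide C D)
    (h1 : dist A C = dist A D) (h2 : dist B C = dist B D) :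
    C = D := by
  by_contra hCD
  have hA : A ∈ affineSpan ℝ ({A, B} : Set (EuclideanSpace ℝ (Fin 2))) :=
    left_mem_affineSpan_pair ℝ A B
  have hB : B ∈ affineSpan ℝ ({A, B} : Set (EuclideanSpace ℝ (Fin 2))) :=
    right_mem_affineSpan_pair ℝ A B
  generalize affineSpan ℝ ({A, B} : Set (EuclideanSpace ℝ (Fin 2))) = s at *
  have : Nonempty s := ⟨⟨A, hA⟩⟩
  have hd : Module.finrank ℝ (EuclideanSpace ℝ (Fin 2)) = 2 := by simp
  have hrA := dist_reflection_eq_of_mem s hA C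
  have hrB := dist_reflection_eq_of_mem s hB C
  rcases eq_of_dist_eq_of_dist_eq_of_finrank_eq_two hd hAB hCD
    (p := reflection s C) (r₁ := dist A C) (r₂ := dist B C) (dist_comm _ _)
    (by rw [dist_comm, h1]) (by rw [dist_comm, hrA]) (dist_comm _ _)
    (by rw [dist_comm, h2]) (by rw [dist_comm, hrB]) with h | h
  · exact hside.left_notMem ((reflection_eq_self_iff C).1 h)
  · apply hside.not_wOppSide
    rw [AffineSubspace.wOppSide_iff_exists_wbtw]
    refine ⟨midpoint ℝ C D, ?_, wbtw_midpoint ℝ C D⟩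
    have hm : midpoint ℝ C D = (orthogonalProjection s C : EuclideanSpace ℝ (Fin 2)) := by
      rw [← h, reflection_apply', midpoint_eq_smul_add, invOf_eq_inv]
      simp only [vsub_eq_sub, vadd_eq_add]
      module
    rw [hm]
    exact orthogonalProjection_mem C
end

section
/- Euclid, Elements I, Proposition 9 (bisection of an angle): if A, B, C are points of the Euclidean plane that are not collinear, then there exists a point D ≠ A such that ∠ B A D = ∠ C A D and ∠ B A C = ∠ B A D + ∠ D A C. -/
open EuclideanGeometry

theorem euclid_I_9 (A B C : EuclideanSpace ℝ (Fin 2))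
    (hnc : ¬ Collinear ℝ ({A, B, C} : Set (EuclideanSpace ℝ (Fin 2)))) :
    ∃ D : EuclideanSpace ℝ (Fin 2), D ≠ A ∧ ∠ B A D = ∠ C A D ∧
      ∠ B A C = ∠ B A D + ∠ D A C := by
  have hu : B - A ≠ 0 := by
    intro h
    rw [sub_eq_zero] at h
    subst h
    exact hnc (by simpa using collinear_pair ℝ B C)
  have hv : C - A ≠ 0 := by
    intro h
    rw [sub_eq_zero] at h
    subst h
    exact hnc (by
      rw [Set.pair_comm, Set.insert_comm]
      simpa [Set.pair_comm] using collinear_pair ℝ B C)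
  have hnu : 0 < ‖B - A‖ := norm_pos_iff.2 hu
  have hnv : 0 < ‖C - A‖ := norm_pos_iff.2 hv
  have hd : ‖C - A‖ • (B - A) + ‖B - A‖ • (C - A) ≠ 0 := by
    intro h
    apply hnc
    rw [collinear_iff_of_mem (p₀ := A) (by simp)]
    refine ⟨B - A, ?_⟩
    have h2 : C - A = (-(‖B - A‖⁻¹ * ‖C - A‖)) • (B - A) := by
      have h3 : ‖B - A‖ • (C - A) = -(‖C - A‖ • (B - A)) := by
        rw [eq_neg_iff_add_eq_zero, add_comm]; exact h
      rw [neg_smul, mul_smul, ← smul_neg, ← h3, smul_smul, inv_mul_cancel₀ hnu.ne', one_smul]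
    intro p hp
    simp only [Set.mem_insert_iff, Set.mem_singleton_iff] at hp
    rcases hp with rfl | rfl | rfl
    · exact ⟨0, by simp⟩
    · exact ⟨1, by simp⟩
    · exact ⟨_, by rw [← h2]; simp⟩
  have key := InnerProductGeometry.angle_eq_angle_add_add_angle_add (‖C - A‖ • (B - A))
    (y := ‖B - A‖ • (C - A)) (smul_ne_zero hnu.ne' hv)
  have heq : InnerProductGeometry.angle (‖C - A‖ • (B - A))
      (‖C - A‖ • (B - A) + ‖B - A‖ • (C - A)) = InnerProductGeometry.angle (‖B - A‖ • (C - A))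
      (‖C - A‖ • (B - A) + ‖B - A‖ • (C - A)) := by
    unfold InnerProductGeometry.angle
    congr 2
    · simp only [inner_add_right, inner_smul_left, inner_smul_right, real_inner_self_eq_norm_sq,
        real_inner_comm (B - A) (C - A)]
      simp
      ring
    · simp only [norm_smul, norm_norm]
      ring
  rw [InnerProductGeometry.angle_smul_left_of_pos _ _ hnv,
    InnerProductGeometry.angle_smul_left_of_pos _ _ hnu] at heq
  rw [InnerProductGeometry.angle_smul_left_of_pos _ _ hnv,
    InnerProductGeometry.angle_smul_right_of_pos _ _ hnu,
    InnerProductGeometry.angle_smul_left_of_pos _ _ hnv,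
    InnerProductGeometry.angle_smul_left_of_pos _ _ hnu] at key
  refine ⟨‖C - A‖ • (B - A) + ‖B - A‖ • (C - A) + A, by simpa using hd, ?_, ?_⟩
  · simpa [EuclideanGeometry.angle] using heq
  · rw [angle_comm (_ + A) A C]
    simpa [EuclideanGeometry.angle] using key
end

section
/- Euclid, Elements I, Proposition 14: let A and B be distinct points of the Euclidean plane and let C and D be points lying strictly on opposite sides of the line through A and B. If ∠ A B C + ∠ A B D = π, then B lies strictly between C and D (in particular C, B, D are collinear). -/
open EuclideanGeometry

theorem euclid_I_14 (A B C D : EuclideanSpace ℝ (Fin 2)) (hAB : A ≠ B)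
    (hside : (affineSpan ℝ ({A, B} : Set (EuclideanSpace ℝ (Fin 2)))).SOppSide C D)
    (hangle : ∠ A B C + ∠ A B D = Real.pi) :
    Sbtw ℝ C B D := by
  haveI : Fact (Module.finrank ℝ (EuclideanSpace ℝ (Fin 2)) = 2) := ⟨by simp⟩
  letI : Module.Oriented ℝ (EuclideanSpace ℝ (Fin 2)) (Fin 2) :=
    ⟨(EuclideanSpace.basisFun (Fin 2) ℝ).toBasis.orientation⟩
  have hA : A ∈ affineSpan ℝ ({A, B} : Set (EuclideanSpace ℝ (Fin 2))) :=
    left_mem_affineSpan_pair ℝ A B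
  have hB : B ∈ affineSpan ℝ ({A, B} : Set (EuclideanSpace ℝ (Fin 2))) :=
    right_mem_affineSpan_pair ℝ A B
  have hC : C ≠ B := fun h => hside.left_notMem (h ▸ hB)
  have hD : D ≠ B := fun h => hside.right_notMem (h ▸ hB)
  have hs := hside.oangle_sign_eq_neg hB hA
  rw [← oangle_rotate_sign B D A, ← oangle_rotate_sign B C A,
    ← oangle_rotate_sign D A B, ← oangle_rotate_sign C A B] at hs
  have hne : (∡ A B C).sign ≠ 0 := by
    rw [Ne, oangle_sign_eq_zero_iff_collinear]
    intro h
    exact hside.left_notMem (h.mem_affineSpan_of_mem_of_ne (p₁ := A) (p₂ := B) (p₃ := C)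
      (by simp) (by simp) (by simp) hAB)
  rw [← oangle_eq_pi_iff_sbtw, ← oangle_add hC hAB hD, oangle_rev A B C]
  have hπ : ((∠ A B C : ℝ) : Real.Angle) + (∠ A B D : ℝ) = Real.pi := by
    rw [← Real.Angle.coe_add, hangle]
  rcases h : (∡ A B C).sign with _ | _ | _
  · exact absurd h hne
  · have h1 : (∡ A B C).sign = -1 := h
    have h2 : (∡ A B D).sign = 1 := by
      first | (rw [hs, h1]; rfl) | simp_all
    rw [oangle_eq_neg_angle_of_sign_eq_neg_one h1, oangle_eq_angle_of_sign_eq_one h2, neg_neg, hπ]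
  · have h1 : (∡ A B C).sign = 1 := h
    have h2 : (∡ A B D).sign = -1 := by
      first | (rw [hs, h1]) | simp_all
    rw [oangle_eq_angle_of_sign_eq_one h1, oangle_eq_neg_angle_of_sign_eq_neg_one h2, ← neg_add, hπ,
      Real.Angle.neg_coe_pi]
end

section
/- Euclid, Elements I, Proposition 16 (exterior angle theorem): let A, B, C be points of the Euclidean plane that are not collinear, and let D be a point such that C lies strictly between B and D. Then the exterior angle ∠ A C D is strictly greater than ∠ B A C and strictly greater than ∠ A B C. -/
open EuclideanGeometry

theorem euclid_I_16 (A B C D : EuclideanSpace ℝ (Fin 2))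
    (hnc : ¬ Collinear ℝ ({A, B, C} : Set (EuclideanSpace ℝ (Fin 2))))
    (hD : Sbtw ℝ B C D) :
    ∠ B A C < ∠ A C D ∧ ∠ A B C < ∠ A C D := by
  have h := exterior_angle_eq_angle_add_angle (p₃ := A) D hD.symm
  have h1 : 0 < ∠ A B C := angle_pos_of_not_collinear hnc
  have h2 : 0 < ∠ B A C := by
    apply angle_pos_of_not_collinear
    rwa [Set.insert_comm]
  have h3 := angle_comm C A B
  constructor <;> linarith
end

section
/- Euclid, Elements I, Proposition 27 (equal alternate angles imply parallelism): let B and C be distinct points of the Euclidean plane and let A and D be points lying strictly on opposite sides of the line through B and C. If the alternate angles satisfy ∠ A B C = ∠ D C B, then the line through A and B is parallel to the line through C and D. -/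
open EuclideanGeometry AffineSubspace

theorem aux_angle {V : Type*} [NormedAddCommGroup V] [InnerProductSpace ℝ V] (u v : V) (s : ℝ)
    (hv : v ≠ 0) (hu : ∀ k : ℝ, u ≠ k • v)
    (h : InnerProductGeometry.angle u v = InnerProductGeometry.angle (u - s • v) v) : s = 0 := by
  have hu0 : u ≠ 0 := fun h => hu 0 (by simp [h])
  have hw0 : u - s • v ≠ 0 := fun h => hu s (sub_eq_zero.mp h)
  have hx0 : u - (inner ℝ u v / ‖v‖ ^ 2) • v ≠ 0 := fun h => hu _ (sub_eq_zero.mp h)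
  have e := congrArg Real.cos h
  rw [InnerProductGeometry.cos_angle, InnerProductGeometry.cos_angle] at e
  have pu := norm_pos_iff.mpr hu0
  have pv := norm_pos_iff.mpr hv
  have pw := norm_pos_iff.mpr hw0
  have px := norm_pos_iff.mpr hx0
  have hw : ‖u - s • v‖ ^ 2 = ‖u‖ ^ 2 - 2 * s * inner ℝ u v + s ^ 2 * ‖v‖ ^ 2 := by
    rw [norm_sub_sq_real, inner_smul_right, norm_smul, mul_pow, Real.norm_eq_abs, sq_abs]; ring
  have hx : ‖u - (inner ℝ u v / ‖v‖ ^ 2) • v‖ ^ 2 * ‖v‖ ^ 2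
      = ‖u‖ ^ 2 * ‖v‖ ^ 2 - (inner ℝ u v) ^ 2 := by
    rw [norm_sub_sq_real, inner_smul_right, norm_smul, mul_pow, Real.norm_eq_abs, sq_abs]
    field_simp; ring
  have hpos : 0 < ‖u‖ ^ 2 * ‖v‖ ^ 2 - (inner ℝ u v) ^ 2 := by rw [← hx]; positivity
  rw [inner_sub_left, inner_smul_left, real_inner_self_eq_norm_sq] at e
  simp only [conj_trivial] at e
  clear hx px hx0 h hu
  generalize ‖u - s • v‖ = w at *
  generalize ‖u‖ = p at *
  generalize ‖v‖ = q at *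
  generalize (inner ℝ u v : ℝ) = a at *
  have e1 : a * w = (a - s * q ^ 2) * p := by
    field_simp at e; linarith
  have e2 : a ^ 2 * w ^ 2 = (a - s * q ^ 2) ^ 2 * p ^ 2 := by
    rw [← mul_pow, e1, mul_pow]
  have e3 : (p ^ 2 * q ^ 2 - a ^ 2) * (a ^ 2 - (a - s * q ^ 2) ^ 2) = 0 := by
    rw [hw] at e2
    linear_combination q ^ 2 * e2
  have e4 : a ^ 2 = (a - s * q ^ 2) ^ 2 := by
    rcases mul_eq_zero.mp e3 with h | h <;> linarith
  have e5 : a = a - s * q ^ 2 := by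
    rcases sq_eq_sq_iff_eq_or_eq_neg.mp e4 with h | h
    · exact h
    · have h' : a - s * q ^ 2 = -a := by linarith
      rw [h'] at e1
      have : a * (w + p) = 0 := by linarith
      rcases mul_eq_zero.mp this with h2 | h2 <;> linarith
  have : s * q ^ 2 = 0 := by linarith
  rcases mul_eq_zero.mp this with h | h
  · exact h
  · exact absurd h (by positivity)

theorem euclid_I_27 (A B C D : EuclideanSpace ℝ (Fin 2)) (hBC : B ≠ C)
    (hside : (affineSpan ℝ ({B, C} : Set (EuclideanSpace ℝ (Fin 2)))).SOppSide A D)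
    (hangle : ∠ A B C = ∠ D C B) :
    (affineSpan ℝ ({A, B} : Set (EuclideanSpace ℝ (Fin 2)))).Parallel
      (affineSpan ℝ ({C, D} : Set (EuclideanSpace ℝ (Fin 2)))) := by
  rw [AffineSubspace.sOppSide_iff_exists_left (left_mem_affineSpan_pair ℝ B C)] at hside
  obtain ⟨hA, hD, P, hP, hray⟩ := hside
  have hAB : A -ᵥ B ≠ 0 := fun h => hA (by
    rw [vsub_eq_zero_iff_eq.mp h]; exact left_mem_affineSpan_pair ℝ B C)
  have hPD : P -ᵥ D ≠ 0 := fun h => hD (by rw [← vsub_eq_zero_iff_eq.mp h]; exact hP)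
  obtain ⟨r, hr, hru⟩ := hray.exists_pos_right hAB hPD
  obtain ⟨t, rfl⟩ := (mem_affineSpan_pair_iff_exists_lineMap_eq).mp hP
  have hv : C - B ≠ 0 := sub_ne_zero.mpr hBC.symm
  have hu : ∀ k : ℝ, A - B ≠ k • (C - B) := fun k h => hA (by
    rw [mem_affineSpan_pair_iff_exists_lineMap_eq]
    refine ⟨k, ?_⟩
    rw [AffineMap.lineMap_apply, vsub_eq_sub, ← h, vadd_eq_add, sub_add_cancel])
  have key : A - B - (r * (t - 1)) • (C - B) = r • (-(D - C)) := by
    simp only [vsub_eq_sub] at hru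
    rw [hru, AffineMap.lineMap_apply, vsub_eq_sub, vadd_eq_add]
    module
  have hs := aux_angle (A - B) (C - B) (r * (t - 1)) hv hu (by
    rw [key, InnerProductGeometry.angle_smul_left_of_pos _ _ hr]
    have := hangle
    unfold EuclideanGeometry.angle at this
    simp only [vsub_eq_sub] at this
    rw [this, ← InnerProductGeometry.angle_neg_neg, neg_sub B C])
  rw [hs, zero_smul, sub_zero] at key
  rw [AffineSubspace.affineSpan_pair_parallel_iff_vectorSpan_eq, vectorSpan_pair, vectorSpan_pair]
  simp only [vsub_eq_sub]
  rw [key, neg_sub]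
  exact Submodule.span_singleton_smul_eq (IsUnit.mk0 r hr.ne') _
end

section
/- Euclid's fifth postulate, proved as a theorem in the Euclidean plane: let B and C be distinct points of the Euclidean plane and let A and D be points lying strictly on the same side of the line through B and C. If the interior angles satisfy ∠ A B C + ∠ B C D < π, then the line through A and B and the line through C and D meet, i.e. there exists a point P belonging to both lines. -/
open EuclideanGeometry
open AffineSubspace

theorem euclid_postulate_5 (A B C D : EuclideanSpace ℝ (Fin 2)) (hBC : B ≠ C)
    (hside : (affineSpan ℝ ({B, C} : Set (EuclideanSpace ℝ (Fin 2)))).SSameSide A D)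
    (hangle : ∠ A B C + ∠ B C D < Real.pi) :
    ∃ P : EuclideanSpace ℝ (Fin 2),
      P ∈ affineSpan ℝ ({A, B} : Set (EuclideanSpace ℝ (Fin 2))) ∧
      P ∈ affineSpan ℝ ({C, D} : Set (EuclideanSpace ℝ (Fin 2))) := by
  have hB : B ∈ affineSpan ℝ ({B, C} : Set (EuclideanSpace ℝ (Fin 2))) :=
    left_mem_affineSpan_pair ℝ B C
  rw [AffineSubspace.sSameSide_iff_exists_left hB] at hside
  obtain ⟨hA, hD, p, hp, hray⟩ := hside
  have h1 : A -ᵥ B ≠ 0 := by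
    intro h
    rw [vsub_eq_zero_iff_eq] at h
    exact hA (h ▸ hB)
  have h2 : D -ᵥ p ≠ 0 := by
    intro h
    rw [vsub_eq_zero_iff_eq] at h
    exact hD (h ▸ hp)
  obtain ⟨r, hr, hrd⟩ := hray.exists_pos_left h1 h2
  obtain ⟨t, rfl⟩ := mem_affineSpan_pair_iff_exists_lineMap_eq.1 hp
  have hDe : D = r • (A - B) + (t • (C - B) + B) := by
    rw [AffineMap.lineMap_apply] at hrd
    simp only [vsub_eq_sub, vadd_eq_add] at hrd
    rw [hrd]; abel
  by_cases ht : t = 1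
  · exfalso
    have hDC : D - C = r • (A - B) := by
      rw [hDe, ht, one_smul]; abel
    have e : ∠ B C D = Real.pi - ∠ A B C := by
      unfold EuclideanGeometry.angle
      simp only [vsub_eq_sub]
      rw [hDC, InnerProductGeometry.angle_smul_right_of_pos _ _ hr, ← neg_sub C B,
        InnerProductGeometry.angle_neg_left, InnerProductGeometry.angle_comm]
    linarith
  · have ht' : 1 - t ≠ 0 := fun h => ht (by linarith)
    refine ⟨AffineMap.lineMap C D (1 / (1 - t)), ?_, AffineMap.lineMap_mem_affineSpan_pair _ _ _⟩
    have : AffineMap.lineMap C D (1 / (1 - t)) = AffineMap.lineMap A B (1 - r / (1 - t)) := by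
      rw [AffineMap.lineMap_apply, AffineMap.lineMap_apply, hDe]
      simp only [vsub_eq_sub, vadd_eq_add]
      ext i
      simp
      field_simp
      ring
    rw [this]
    exact AffineMap.lineMap_mem_affineSpan_pair _ _ _
end

section
/- Euclid, Elements I, Proposition 29 (a transversal of parallel lines makes equal alternate angles): let B and C be distinct points of the Euclidean plane and let A and D be points lying strictly on opposite sides of the line through B and C. If the line through A and B is parallel to the line through C and D, then ∠ A B C = ∠ D C B. -/
open EuclideanGeometry

theorem euclid_I_29 (A B C D : EuclideanSpace ℝ (Fin 2)) (hBC : B ≠ C)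
    (hside : (affineSpan ℝ ({B, C} : Set (EuclideanSpace ℝ (Fin 2)))).SOppSide A D)
    (hpar : (affineSpan ℝ ({A, B} : Set (EuclideanSpace ℝ (Fin 2)))).Parallel
      (affineSpan ℝ ({C, D} : Set (EuclideanSpace ℝ (Fin 2))))) :
    ∠ A B C = ∠ D C B := by
  have hB : B ∈ affineSpan ℝ ({B, C} : Set (EuclideanSpace ℝ (Fin 2))) :=
    left_mem_affineSpan_pair ℝ B C
  have hC : C ∈ affineSpan ℝ ({B, C} : Set (EuclideanSpace ℝ (Fin 2))) :=
    right_mem_affineSpan_pair ℝ B C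
  rw [AffineSubspace.affineSpan_pair_parallel_iff_vectorSpan_eq] at hpar
  have hD : D -ᵥ C ∈ vectorSpan ℝ ({A, B} : Set (EuclideanSpace ℝ (Fin 2))) := by
    rw [hpar]
    exact vsub_rev_mem_vectorSpan_pair ℝ C D
  obtain ⟨k, hk⟩ := mem_vectorSpan_pair.1 hD
  have hDk : D = k • (A -ᵥ B) +ᵥ C := by rw [hk, vsub_vadd]
  have hneg : k < 0 := by
    by_contra h
    have hw := AffineSubspace.wSameSide_smul_vsub_vadd_left A hB hC (not_lt.1 h)
    rw [← hDk] at hw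
    rcases (AffineSubspace.wSameSide_and_wOppSide_iff.1 ⟨hw.symm, hside.1⟩) with h1 | h1
    · exact hside.2.1 h1
    · exact hside.2.2 h1
  unfold EuclideanGeometry.angle
  rw [← hk, InnerProductGeometry.angle_smul_left_of_neg _ _ hneg, ← neg_vsub_eq_vsub_rev C B,
    InnerProductGeometry.angle_neg_neg]
end

section
/- Euclid, Elements I, Proposition 42 (to construct in a given angle a parallelogram equal to a given triangle): let A, B, C be points of the Euclidean plane that are not collinear and let θ be a real number with 0 < θ < π. Then there exist points P, Q, S of the plane, not collinear, such that ∠ Q P S = θ and the parallelogram with vertices P, Q, Q + (S − P), S has the same area as the triangle A B C: volume (convexHull ℝ {P, Q, Q + (S − P), S}) = volume (convexHull ℝ {A, B, C}). -/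
open EuclideanGeometry MeasureTheory
open scoped Pointwise

theorem tri_pos (A B C : EuclideanSpace ℝ (Fin 2))
    (hnc : ¬ Collinear ℝ ({A, B, C} : Set (EuclideanSpace ℝ (Fin 2)))) :
    0 < volume (convexHull ℝ ({A, B, C} : Set (EuclideanSpace ℝ (Fin 2)))) := by
  apply Measure.measure_pos_of_nonempty_interior
  rw [interior_convexHull_nonempty_iff_affineSpan_eq_top]
  have h := affineIndependent_iff_not_collinear_set.2 hnc
  have h2 := (h.affineSpan_eq_top_iff_card_eq_finrank_add_one).2 (by simp)
  rw [← h2]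
  congr 1
  ext x
  simp [eq_comm]
  tauto

theorem noncol_of_angle (P Q S : EuclideanSpace ℝ (Fin 2)) (hQ : Q ≠ P) (hS : S ≠ P)
    (θ : ℝ) (hθ0 : 0 < θ) (hθπ : θ < Real.pi) (h : ∠ Q P S = θ) :
    ¬ Collinear ℝ ({P, Q, S} : Set (EuclideanSpace ℝ (Fin 2))) := by
  rw [Set.insert_comm, collinear_iff_eq_or_eq_or_angle_eq_zero_or_angle_eq_pi, h]
  rintro (h | h | h | h)
  · exact hQ h
  · exact hS h
  · linarith
  · linarith

theorem euclid_I_42 (A B C : EuclideanSpace ℝ (Fin 2))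
    (hnc : ¬ Collinear ℝ ({A, B, C} : Set (EuclideanSpace ℝ (Fin 2))))
    (θ : ℝ) (hθ0 : 0 < θ) (hθπ : θ < Real.pi) :
    ∃ P Q S : EuclideanSpace ℝ (Fin 2),
      ¬ Collinear ℝ ({P, Q, S} : Set (EuclideanSpace ℝ (Fin 2))) ∧
      ∠ Q P S = θ ∧
      volume (convexHull ℝ ({P, Q, Q + (S - P), S} : Set (EuclideanSpace ℝ (Fin 2)))) =
        volume (convexHull ℝ ({A, B, C} : Set (EuclideanSpace ℝ (Fin 2)))) := by
  obtain ⟨Q, hQ⟩ : ∃ Q : EuclideanSpace ℝ (Fin 2), Q = !₂[1, 0] := ⟨_, rfl⟩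
  obtain ⟨S, hS⟩ : ∃ S : EuclideanSpace ℝ (Fin 2), S = !₂[Real.cos θ, Real.sin θ] := ⟨_, rfl⟩
  have nQ : ‖Q‖ = 1 := by simp [hQ, EuclideanSpace.norm_eq]
  have nS : ‖S‖ = 1 := by simp [hS, EuclideanSpace.norm_eq]
  have hang : InnerProductGeometry.angle Q S = θ := by
    rw [InnerProductGeometry.angle, nQ, nS]
    have : inner ℝ Q S = Real.cos θ := by
      simp [hQ, hS, PiLp.inner_apply, Fin.sum_univ_two]
    rw [this]
    simp [Real.arccos_cos hθ0.le hθπ.le]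
  have Q0 : Q ≠ 0 := by rw [← norm_ne_zero_iff, nQ]; norm_num
  have S0 : S ≠ 0 := by rw [← norm_ne_zero_iff, nS]; norm_num
  have hang' : ∠ Q 0 S = θ := by simpa [EuclideanGeometry.angle] using hang
  set K : Set (EuclideanSpace ℝ (Fin 2)) := convexHull ℝ {0, Q, Q + S, S} with hK
  set T : Set (EuclideanSpace ℝ (Fin 2)) := convexHull ℝ {A, B, C} with hT
  have Kpos : 0 < volume K :=
    (tri_pos 0 Q S (noncol_of_angle 0 Q S Q0 S0 θ hθ0 hθπ hang')).trans_le
      (measure_mono (convexHull_mono (by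
        intro x hx
        simp only [Set.mem_insert_iff, Set.mem_singleton_iff] at hx ⊢
        tauto)))
  have Tpos : 0 < volume T := tri_pos A B C hnc
  have Kfin : volume K ≠ ⊤ :=
    ((Set.toFinite ({0, Q, Q + S, S} : Set _)).isCompact_convexHull ℝ).measure_lt_top.ne
  have Tfin : volume T ≠ ⊤ :=
    ((Set.toFinite ({A, B, C} : Set _)).isCompact_convexHull ℝ).measure_lt_top.ne
  have kp := ENNReal.toReal_pos Kpos.ne' Kfin
  have tp := ENNReal.toReal_pos Tpos.ne' Tfin
  obtain ⟨r, hr⟩ : ∃ r, r = Real.sqrt ((volume T).toReal / (volume K).toReal) := ⟨_, rfl⟩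
  have r0 : 0 < r := by rw [hr]; positivity
  have r2 : r ^ 2 = (volume T).toReal / (volume K).toReal := by
    rw [hr, Real.sq_sqrt (by positivity)]
  have ha : ∠ (r • Q) 0 (r • S) = θ := by
    simp only [EuclideanGeometry.angle, vsub_eq_sub, sub_zero]
    rw [InnerProductGeometry.angle_smul_smul r0.ne', hang]
  refine ⟨0, r • Q, r • S, noncol_of_angle _ _ _ (smul_ne_zero r0.ne' Q0)
    (smul_ne_zero r0.ne' S0) θ hθ0 hθπ ha, ha, ?_⟩
  have hs : convexHull ℝ ({0, r • Q, r • Q + (r • S - 0), r • S} : Set (EuclideanSpace ℝ (Fin 2)))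
      = r • K := by
    rw [hK, ← convexHull_smul]
    simp [← Set.image_smul, Set.image_insert_eq]
  rw [hs, Measure.addHaar_smul, finrank_euclideanSpace_fin, r2, abs_of_nonneg (by positivity),
    ENNReal.ofReal_div_of_pos kp, ENNReal.ofReal_toReal Kfin, ENNReal.ofReal_toReal Tfin,
    ENNReal.div_mul_cancel Kpos.ne' Kfin]
end
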